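/- The map (F,K) ↦ D_F(K) is a Borel measurable function from C[a,b] × K[a,b] to K[a,b]. -/

import Mathlib

open MeasureTheory Set Filter

noncomputable section

attribute [local instance] Classical.propDecidable

/-- The oscillation `ω(F, J)` of `F` on the set `J`. -/
def osc (F : ℝ → ℝ) (J : Set ℝ) : ℝ :=
  sSup {d : ℝ | ∃ x ∈ J, ∃ y ∈ J, d = |F x - F y|}

/-- `D` is a `K`-edged pre-partition of `[a,b]`: a finite nonempty collection of
pairwise non-overlapping closed subintervals of `[a,b]` whose endpoints lie in `K`. -/
def IsPrePartition (a b : ℝ) (K : Set ℝ) (D : Finset (ℝ × ℝ)) : Prop :=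
  D.Nonempty ∧
  (∀ p ∈ D, p.1 ≤ p.2 ∧ p.1 ∈ K ∧ p.2 ∈ K ∧ Icc p.1 p.2 ⊆ Icc a b) ∧
  (D : Set (ℝ × ℝ)).Pairwise fun p q => p.2 ≤ q.1 ∨ q.2 ≤ p.1

/-- `F ∈ AC_*(K)`: absolute continuity in the restricted sense on `K`. -/
def ACStar (a b : ℝ) (F : ℝ → ℝ) (K : Set ℝ) : Prop :=
  ∀ ε > (0:ℝ), ∃ δ > (0:ℝ), ∀ D : Finset (ℝ × ℝ), IsPrePartition a b K D →
    (∑ p ∈ D, (p.2 - p.1)) < δ → (∑ p ∈ D, osc F (Icc p.1 p.2)) < ε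

/-- `F ∈ ACG_*(K)`: `K` is a countable union of closed sets `Kₙ ⊆ [a,b]` with `F ∈ AC_*(Kₙ)`. -/
def ACGStar (a b : ℝ) (F : ℝ → ℝ) (K : Set ℝ) : Prop :=
  ∃ C : ℕ → Set ℝ, (∀ n, IsClosed (C n) ∧ C n ⊆ Icc a b ∧ ACStar a b F (C n)) ∧
    K = ⋃ n, C n

/-- `F` is the indefinite Denjoy integral of `f` on `[a,b]`:
`F` is continuous on `[a,b]`, `F(a) = 0`, `F ∈ ACG_*([a,b])`, and `F' = f` a.e. on `[a,b]`. -/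
def HasDenjoyIntegralFn (a b : ℝ) (f F : ℝ → ℝ) : Prop :=
  ContinuousOn F (Icc a b) ∧ F a = 0 ∧ ACGStar a b F (Icc a b) ∧
    ∀ᵐ x ∂(volume.restrict (Icc a b)), HasDerivAt F (f x) x

/-- `f ∈ Den[a,b]`: `f` is Denjoy integrable on `[a,b]`. -/
def DenjoyIntegrable (a b : ℝ) (f : ℝ → ℝ) : Prop :=
  ∃ F : ℝ → ℝ, HasDenjoyIntegralFn a b f F

/-- The Denjoy integral `∫_a^b f` (junk value `0` if `f` is not Denjoy integrable). -/
def denjoyIntegral (a b : ℝ) (f : ℝ → ℝ) : ℝ :=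
  if h : DenjoyIntegrable a b f then Classical.choose h b else 0

/-- The derivative `D_f(K)`: points of `K` at which `f` is not locally Lebesgue integrable
relative to `K`. -/
def Df (f : ℝ → ℝ) (K : Set ℝ) : Set ℝ :=
  {x ∈ K | ∀ c d : ℝ, c < x → x < d → ¬ IntegrableOn f (Icc c d ∩ K) volume}

/-- The derivative `D_F(K)`: points of `K` at which `F` is not locally `AC_*` relative to `K`. -/
def DF (a b : ℝ) (F : ℝ → ℝ) (K : Set ℝ) : Set ℝ :=
  {x ∈ K | ∀ c d : ℝ, c < x → x < d → ¬ ACStar a b F (Icc c d ∩ K)}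

/-- The derivative `D_{f,F}(K) = D_f(K) ∪ D_F(K)`. -/
def DfF (a b : ℝ) (f F : ℝ → ℝ) (K : Set ℝ) : Set ℝ := Df f K ∪ DF a b F K

/-- Transfinite iterates of a derivative operation on sets:
`D⁰(K) = K`, `D^(α+1)(K) = D(D^α(K))`, and `D^α(K) = ⋂_(β<α) D^β(K)` for limit `α`. -/
def derivIter (D : Set ℝ → Set ℝ) (K : Set ℝ) (α : Ordinal.{0}) : Set ℝ :=
  Ordinal.limitRecOn α K (fun _ ih => D ih) (fun o _ ih => ⋂ β : Iio o, ih β.1 β.2)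

/-- `D^∞(K) = ⋂_(α<ω₁) D^α(K)`. -/
def derivInfty (D : Set ℝ → Set ℝ) (K : Set ℝ) : Set ℝ :=
  ⋂ (α : Ordinal.{0}) (_ : α.card ≤ Cardinal.aleph0), derivIter D K α

/-- `K[a,b]`: the space of closed subsets of `[a,b]` (topologized by the Hausdorff
extended metric, which for the compact set `[a,b]` agrees with the Vietoris topology). -/
abbrev KSpace (a b : ℝ) := TopologicalSpace.Closeds (Icc a b)

lemma isClosed_locSet (K : Set ℝ) (hK : IsClosed K) (P : ℝ → ℝ → Prop) :
    IsClosed {x ∈ K | ∀ c d : ℝ, c < x → x < d → ¬ P c d} := by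
  have hS : IsOpen {x : ℝ | ∃ c d : ℝ, c < x ∧ x < d ∧ P c d} := by
    rw [isOpen_iff_mem_nhds]
    rintro x ⟨c, d, hc, hd, hP⟩
    exact Filter.mem_of_superset (Ioo_mem_nhds hc hd) fun y hy => ⟨c, d, hy.1, hy.2, hP⟩
  have he : {x ∈ K | ∀ c d : ℝ, c < x → x < d → ¬ P c d}
      = K ∩ {x : ℝ | ∃ c d : ℝ, c < x ∧ x < d ∧ P c d}ᶜ := by
    ext x
    constructor
    · rintro ⟨hx, h⟩
      exact ⟨hx, fun hmem => by obtain ⟨c, d, hc, hd, hP⟩ := hmem; exact h c d hc hd hP⟩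
    · rintro ⟨hx, h⟩
      exact ⟨hx, fun c d hc hd hP => h ⟨c, d, hc, hd, hP⟩⟩
  rw [he]
  exact hK.inter hS.isClosed_compl

lemma isClosed_DF (a b : ℝ) (F : ℝ → ℝ) (K : Set ℝ) (hK : IsClosed K) :
    IsClosed (DF a b F K) := by
  unfold DF; exact isClosed_locSet K hK _

/-- The map `(F, K) ↦ D_F(K)`. -/
def DFMap (a b : ℝ) (hab : a < b) : C(Icc a b, ℝ) × KSpace a b → KSpace a b := fun p =>
  ⟨{x : Icc a b | (x : ℝ) ∈ DF a b (fun y => p.1 (projIcc a b hab.le y))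
      (Subtype.val '' (p.2 : Set (Icc a b)))},
   (isClosed_DF _ _ _ _ (p.2.2.isCompact.image continuous_subtype_val).isClosed).preimage
     continuous_subtype_val⟩

namespace DFProof

open TopologicalSpace Metric
open scoped ENNReal

/-- A map into the hyperspace of closed sets is Borel as soon as open hit sets pull back
to measurable sets. -/
lemma measurable_of_hit {Z X : Type*} [MeasurableSpace Z] [EMetricSpace X] [CompactSpace X]
    (f : Z → Closeds X)
    (hf : ∀ U : Set X, IsOpen U → MeasurableSet {z | ((f z : Set X) ∩ U).Nonempty}) :
    @Measurable Z (Closeds X) _ (borel _) f := by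
  have : SecondCountableTopology X := EMetric.secondCountable_of_sigmaCompact X
  have : SecondCountableTopology (Closeds X) := EMetric.secondCountable_of_sigmaCompact _
  have hinf : ∀ x : X, Measurable fun z => infEDist x (f z : Set X) := by
    intro x
    refine measurable_of_Iio fun r => ?_
    convert hf {y | edist x y < r} (isOpen_lt (by fun_prop) (by fun_prop)) using 1
    ext z
    simp [infEDist_lt_iff, Set.Nonempty]
  have hed : ∀ K : Closeds X, Measurable fun z => edist (f z) K := by
    intro K
    have h1 : Measurable fun z => ⨆ x ∈ (f z : Set X), infEDist x (K : Set X) := by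
      refine measurable_of_Ioi fun r => ?_
      convert hf {y | r < infEDist y (K : Set X)}
        (isOpen_lt continuous_const continuous_infEDist) using 1
      ext z
      simp [lt_iSup_iff, Set.Nonempty]
    have h2 : Measurable fun z => ⨆ x ∈ (K : Set X), infEDist x (f z : Set X) := by
      obtain ⟨S, hSc, hSd⟩ := exists_countable_dense (K : Set X)
      have : (fun z => ⨆ x ∈ (K : Set X), infEDist x (f z : Set X)) =
          fun z => ⨆ x ∈ S, infEDist (x : X) (f z : Set X) := by
        funext z
        apply le_antisymm
        · refine le_of_forall_lt fun r hr => ?_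
          simp only [lt_iSup_iff] at hr
          obtain ⟨x, hx, hr⟩ := hr
          obtain ⟨y, hy, hyS⟩ := hSd.exists_mem_open
            (U := {y : (K : Set X) | r < infEDist (y : X) (f z : Set X)})
            (isOpen_lt continuous_const (continuous_infEDist.comp continuous_subtype_val))
            ⟨⟨x, hx⟩, hr⟩
          simp only [lt_iSup_iff]
          exact ⟨_, by assumption, by assumption⟩
        · refine iSup₂_le fun x _ => ?_
          exact le_iSup₂ (f := fun (x : X) (_ : x ∈ (K : Set X)) => infEDist x (f z : Set X))
            x.1 x.2
      rw [this]
      exact Measurable.biSup S hSc fun x _ => hinf x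
    simp only [Closeds.edist_eq, hausdorffEDist]
    exact h1.max h2
  let _ : MeasurableSpace (Closeds X) := borel _
  have : BorelSpace (Closeds X) := ⟨rfl⟩
  refine measurable_of_isOpen fun V hV => ?_
  have hV' : ∀ v : V, ∃ r > 0, Metric.eball (v : Closeds X) r ⊆ V := fun v =>
    EMetric.isOpen_iff.1 hV v v.2
  choose r hr0 hr using hV'
  obtain ⟨T, hT, hTe⟩ := isOpen_iUnion_countable (fun v : V => Metric.eball (v : Closeds X) (r v))
    (fun v => Metric.isOpen_eball)
  have hVe : V = ⋃ v ∈ T, Metric.eball (v : Closeds X) (r v) := by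
    rw [hTe]
    apply Subset.antisymm
    · intro v hv
      exact mem_iUnion.2 ⟨⟨v, hv⟩, Metric.mem_eball_self (hr0 _)⟩
    · exact iUnion_subset hr
  rw [hVe, preimage_iUnion₂]
  refine MeasurableSet.biUnion hT fun v _ => ?_
  exact hed v measurableSet_Iio

/-- Membership is a closed relation. -/
lemma isClosed_mem {X : Type*} [EMetricSpace X] :
    IsClosed {q : X × Closeds X | q.1 ∈ q.2} := by
  have : {q : X × Closeds X | q.1 ∈ q.2} = {q | infEDist q.1 (q.2 : Set X) = 0} := by
    ext q
    simp only [mem_ofPred_eq]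
    exact mem_iff_infEDist_zero_of_closed q.2.isClosed
  rw [this]
  exact isClosed_eq Closeds.continuous_infEDist continuous_const

variable {a b : ℝ}

/-- The closed set of witnesses against absolute continuity. -/
def Bad (a b : ℝ) (n : ℕ) (ε δ c d : ℝ) :
    Set ((C(Icc a b, ℝ) × KSpace a b) ×
      (Fin n → (Icc a b × Icc a b) × (Icc a b × Icc a b))) :=
  {q | (∀ i, (q.2 i).1.1 ∈ q.1.2 ∧ (q.2 i).1.2 ∈ q.1.2 ∧
        c ≤ (q.2 i).1.1 ∧ ((q.2 i).1.1 : ℝ) ≤ d ∧ c ≤ (q.2 i).1.2 ∧ ((q.2 i).1.2 : ℝ) ≤ d ∧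
        (q.2 i).1.1 ≤ (q.2 i).2.1 ∧ (q.2 i).2.1 ≤ (q.2 i).1.2 ∧
        (q.2 i).1.1 ≤ (q.2 i).2.2 ∧ (q.2 i).2.2 ≤ (q.2 i).1.2) ∧
      (∀ i j, i ≠ j → (q.2 i).1.2 ≤ (q.2 j).1.1 ∨ (q.2 j).1.2 ≤ (q.2 i).1.1) ∧
      (∑ i, (((q.2 i).1.2 : ℝ) - (q.2 i).1.1)) ≤ δ ∧
      ε ≤ ∑ i, |q.1.1 (q.2 i).2.1 - q.1.1 (q.2 i).2.2|}

lemma isClosed_Bad (n : ℕ) (ε δ c d : ℝ) : IsClosed (Bad a b n ε δ c d) := by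
  unfold Bad
  simp only [ofPred_and, ofPred_forall]
  refine IsClosed.inter ?_ (IsClosed.inter ?_ (IsClosed.inter ?_ ?_))
  · refine isClosed_iInter fun i => ?_
    refine IsClosed.inter ?_ (IsClosed.inter ?_ ?_)
    · exact isClosed_mem.preimage (f := fun q : (C(Icc a b, ℝ) × KSpace a b) ×
        (Fin n → (Icc a b × Icc a b) × (Icc a b × Icc a b)) => ((q.2 i).1.1, q.1.2)) (by fun_prop)
    · exact isClosed_mem.preimage (f := fun q : (C(Icc a b, ℝ) × KSpace a b) ×
        (Fin n → (Icc a b × Icc a b) × (Icc a b × Icc a b)) => ((q.2 i).1.2, q.1.2)) (by fun_prop)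
    · repeat' apply IsClosed.inter
      all_goals exact isClosed_le (by fun_prop) (by fun_prop)
  · refine isClosed_iInter fun i => isClosed_iInter fun j => isClosed_iInter fun _ => ?_
    simp only [ofPred_or]
    refine IsClosed.union ?_ ?_ <;> exact isClosed_le (by fun_prop) (by fun_prop)
  · exact isClosed_le (by fun_prop) (by fun_prop)
  · refine isClosed_le (by fun_prop) ?_
    refine continuous_finsetSum _ fun i _ => ?_
    refine Continuous.abs (Continuous.sub ?_ ?_)
    · exact continuous_eval.comp (f := fun q : (C(Icc a b, ℝ) × KSpace a b) ×
        (Fin n → (Icc a b × Icc a b) × (Icc a b × Icc a b)) => (q.1.1, (q.2 i).2.1)) (by fun_prop)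
    · exact continuous_eval.comp (f := fun q : (C(Icc a b, ℝ) × KSpace a b) ×
        (Fin n → (Icc a b × Icc a b) × (Icc a b × Icc a b)) => (q.1.1, (q.2 i).2.2)) (by fun_prop)

lemma isClosed_projBad (n : ℕ) (ε δ c d : ℝ) :
    IsClosed {p | ∃ t, (p, t) ∈ Bad a b n ε δ c d} := by
  have := isClosedMap_fst_of_compactSpace _ (isClosed_Bad (a := a) (b := b) n ε δ c d)
  convert this using 1
  ext p
  simp

/-- On a compact interval the oscillation is attained. -/
lemma osc_attained {G : ℝ → ℝ} (hG : Continuous G) {x y : ℝ} (hxy : x ≤ y) :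
    ∃ u ∈ Icc x y, ∃ v ∈ Icc x y, osc G (Icc x y) = |G u - G v| := by
  obtain ⟨w, hw, hmax⟩ := (isCompact_Icc (a := x) (b := y)).prod (isCompact_Icc (a := x) (b := y))
    |>.exists_isMaxOn (f := fun w : ℝ × ℝ => |G w.1 - G w.2|)
      ⟨(x, x), ⟨left_mem_Icc.2 hxy, left_mem_Icc.2 hxy⟩⟩ (by fun_prop)
  refine ⟨w.1, hw.1, w.2, hw.2, ?_⟩
  refine IsGreatest.csSup_eq ⟨⟨w.1, hw.1, w.2, hw.2, rfl⟩, ?_⟩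
  rintro _ ⟨u, hu, v, hv, rfl⟩
  exact hmax (show (u, v) ∈ _ from ⟨hu, hv⟩)

lemma le_osc {G : ℝ → ℝ} (hG : Continuous G) {x y u v : ℝ} (hu : u ∈ Icc x y)
    (hv : v ∈ Icc x y) : |G u - G v| ≤ osc G (Icc x y) := by
  obtain ⟨w, hw, hmax⟩ := (isCompact_Icc (a := x) (b := y)).prod (isCompact_Icc (a := x) (b := y))
    |>.exists_isMaxOn (f := fun w : ℝ × ℝ => |G w.1 - G w.2|)
      ⟨(u, v), ⟨hu, hv⟩⟩ (by fun_prop)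
  refine le_csSup ⟨|G w.1 - G w.2|, ?_⟩ ⟨u, hu, v, hv, rfl⟩
  rintro _ ⟨u, hu, v, hv, rfl⟩
  exact hmax (show (u, v) ∈ _ from ⟨hu, hv⟩)

lemma osc_self (G : ℝ → ℝ) (x : ℝ) : osc G (Icc x x) = 0 := by
  simp [osc]

/-- `AC_*` expressed by countable operations on the closed sets above. -/
lemma acstar_iff (hab : a < b) (p : C(Icc a b, ℝ) × KSpace a b) (c d : ℝ) :
    ACStar a b (fun y => p.1 (projIcc a b hab.le y))
      (Icc c d ∩ Subtype.val '' (p.2 : Set (Icc a b))) ↔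
    ∀ k : ℕ, ∃ m : ℕ, ∀ n : ℕ,
      ¬ ∃ t, (p, t) ∈ Bad a b n (1 / ((k : ℝ) + 1)) (1 / ((m : ℝ) + 1)) c d := by
  set G : ℝ → ℝ := fun y => p.1 (projIcc a b hab.le y) with hGdef
  have hG : Continuous G := p.1.continuous.comp continuous_projIcc
  have hGv : ∀ x : Icc a b, G x = p.1 x := fun x => by simp [hGdef]
  constructor
  · intro h k
    obtain ⟨δ, hδ, hD⟩ := h (1 / ((k : ℝ) + 1)) (by positivity)
    obtain ⟨m, hm⟩ := exists_nat_one_div_lt hδ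
    refine ⟨m, ?_⟩
    rintro n ⟨t, h1, h2, h3, h4⟩
    simp only at h1 h2 h3 h4
    set g : Fin n → ℝ × ℝ := fun i => (((t i).1.1 : ℝ), ((t i).1.2 : ℝ)) with hg
    have hle : ∀ i, ((t i).1.1 : ℝ) ≤ (t i).1.2 := fun i =>
      le_trans (h1 i).2.2.2.2.2.2.1 (h1 i).2.2.2.2.2.2.2.1
    have hdeg : ∀ i j, i ≠ j → g i = g j → ((t i).1.1 : ℝ) = (t i).1.2 := by
      intro i j hij he
      simp only [hg, Prod.mk.injEq] at he
      have := h2 i j hij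
      simp only [← Subtype.coe_le_coe] at this
      have := hle i
      have := hle j
      rcases h2 i j hij with h | h <;> rw [← Subtype.coe_le_coe] at h <;> linarith [he.1, he.2]
    have hpp : IsPrePartition a b (Icc c d ∩ Subtype.val '' (p.2 : Set (Icc a b)))
        (Finset.univ.image g) := by
      refine ⟨?_, ?_, ?_⟩
      · rw [Finset.image_nonempty]
        by_contra hne
        rw [Finset.not_nonempty_iff_eq_empty] at hne
        rw [hne, Finset.sum_empty] at h4
        have : (0 : ℝ) < 1 / ((k : ℝ) + 1) := by positivity
        linarith
      · intro q hq
        obtain ⟨i, -, rfl⟩ := Finset.mem_image.1 hq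
        obtain ⟨e1, e2, e3, e4, e5, e6, -⟩ := h1 i
        exact ⟨hle i, ⟨⟨e3, e4⟩, _, e1, rfl⟩, ⟨⟨e5, e6⟩, _, e2, rfl⟩,
          Icc_subset_Icc (t i).1.1.2.1 (t i).1.2.2.2⟩
      · intro q hq r hr hqr
        obtain ⟨i, -, rfl⟩ := Finset.mem_image.1 (Finset.mem_coe.1 hq)
        obtain ⟨j, -, rfl⟩ := Finset.mem_image.1 (Finset.mem_coe.1 hr)
        exact h2 i j (fun h => hqr (by rw [h]))
    have key := hD _ hpp
    rw [Finset.sum_image_of_pairwise_eq_zero, Finset.sum_image_of_pairwise_eq_zero] at key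
    · have := key (lt_of_le_of_lt h3 hm)
      have h5 : ∑ i, |p.1 (t i).2.1 - p.1 (t i).2.2| ≤ ∑ i, osc G (Icc (g i).1 (g i).2) := by
        refine Finset.sum_le_sum fun i _ => ?_
        rw [← hGv, ← hGv]
        obtain ⟨e1, e2, e3, e4, e5, e6, e7, e8, e9, e10⟩ := h1 i
        exact le_osc hG ⟨e7, e8⟩ ⟨e9, e10⟩
      linarith
    · intro i _ j _ hij he
      have := hdeg i j hij he
      show osc G (Icc ((t i).1.1 : ℝ) (t i).1.2) = 0
      rw [← this, osc_self]
    · intro i _ j _ hij he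
      have := hdeg i j hij he
      show ((t i).1.2 : ℝ) - (t i).1.1 = 0
      linarith
  · intro h ε hε
    obtain ⟨k, hk⟩ := exists_nat_one_div_lt hε
    obtain ⟨m, hm⟩ := h k
    refine ⟨1 / ((m : ℝ) + 1), by positivity, ?_⟩
    rintro D ⟨-, hD1, hD2⟩ hlen
    by_contra hcon
    push Not at hcon
    have hex : ∀ q : D, ∃ s : (Icc a b × Icc a b) × (Icc a b × Icc a b),
        (s.1.1 : ℝ) = q.1.1 ∧ (s.1.2 : ℝ) = q.1.2 ∧ (s.2.1 : ℝ) ∈ Icc q.1.1 q.1.2 ∧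
        (s.2.2 : ℝ) ∈ Icc q.1.1 q.1.2 ∧ s.1.1 ∈ p.2 ∧ s.1.2 ∈ p.2 ∧
        osc G (Icc q.1.1 q.1.2) = |p.1 s.2.1 - p.1 s.2.2| := by
      rintro ⟨q, hq⟩
      obtain ⟨e1, ⟨-, x, hx, hx'⟩, ⟨-, y, hy, hy'⟩, e4⟩ := hD1 q hq
      obtain ⟨u, hu, v, hv, huv⟩ := osc_attained hG e1
      refine ⟨((x, y), (⟨u, e4 hu⟩, ⟨v, e4 hv⟩)), hx', hy', hu, hv, hx, hy, ?_⟩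
      rw [← hGv, ← hGv]
      exact huv
    choose s hs using hex
    let e := D.equivFin
    refine hm D.card ⟨fun i => s (e.symm i), ?_, ?_, ?_, ?_⟩
    · intro i
      obtain ⟨e1, e2, e3, e4, e5, e6, -⟩ := hs (e.symm i)
      obtain ⟨-, ⟨h1, -⟩, ⟨h2, -⟩, -⟩ := hD1 _ (e.symm i).2
      simp only [← Subtype.coe_le_coe]
      rw [e1, e2]
      exact ⟨e5, e6, h1.1, h1.2, h2.1, h2.2, e3.1, e3.2, e4.1, e4.2⟩
    · intro i j hij
      have := hD2 (e.symm i).2 (e.symm j).2 (fun h => hij (e.symm.injective (Subtype.ext h)))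
      simp only [← Subtype.coe_le_coe]
      rw [(hs _).1, (hs _).2.1, (hs _).1, (hs _).2.1]
      exact this
    · simp only [(hs _).1, (hs _).2.1]
      rw [Equiv.sum_comp e.symm (fun q : D => q.1.2 - q.1.1),
        Finset.sum_coe_sort D (fun q => q.2 - q.1)]
      exact hlen.le
    · simp only [← (hs _).2.2.2.2.2.2]
      rw [Equiv.sum_comp e.symm (fun q : D => osc G (Icc q.1.1 q.1.2)),
        Finset.sum_coe_sort D (fun q => osc G (Icc q.1 q.2))]
      exact hk.le.trans hcon

lemma acstar_mono {F : ℝ → ℝ} {K L : Set ℝ} (h : K ⊆ L) (hL : ACStar a b F L) :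
    ACStar a b F K := by
  intro ε hε
  obtain ⟨δ, hδ, hD⟩ := hL ε hε
  refine ⟨δ, hδ, fun D hDp => hD D ⟨hDp.1, fun p hp => ?_, hDp.2.2⟩⟩
  obtain ⟨e1, e2, e3, e4⟩ := hDp.2.1 p hp
  exact ⟨e1, h e2, h e3, e4⟩

lemma acstar_empty (F : ℝ → ℝ) : ACStar a b F ∅ := by
  intro ε hε
  refine ⟨1, one_pos, ?_⟩
  rintro D ⟨⟨p, hp⟩, h, -⟩
  exact absurd (h p hp).2.1 (notMem_empty _)

/-- Missing a compact set, in terms of finite covers by rational intervals. -/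
lemma miss_iff (hab : a < b) (p : C(Icc a b, ℝ) × KSpace a b) {C : Set (Icc a b)}
    (hC : IsCompact C) :
    ¬ (((DFMap a b hab p : KSpace a b) : Set (Icc a b)) ∩ C).Nonempty ↔
    ∃ S : Finset (ℚ × ℚ), (C ⊆ ⋃ s ∈ S, {x : Icc a b | (s.1 : ℝ) < x ∧ (x : ℝ) < s.2}) ∧
      ∀ s ∈ S, ACStar a b (fun y => p.1 (projIcc a b hab.le y))
        (Icc (s.1 : ℝ) (s.2 : ℝ) ∩ Subtype.val '' (p.2 : Set (Icc a b))) := by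
  constructor
  · intro h
    have hloc : ∀ x ∈ C, ∃ s : ℚ × ℚ, ((s.1 : ℝ) < x ∧ (x : ℝ) < s.2) ∧
        ACStar a b (fun y => p.1 (projIcc a b hab.le y))
        (Icc (s.1 : ℝ) (s.2 : ℝ) ∩ Subtype.val '' (p.2 : Set (Icc a b))) := by
      intro x hx
      have hx' : (x : ℝ) ∉ DF a b (fun y => p.1 (projIcc a b hab.le y))
          (Subtype.val '' (p.2 : Set (Icc a b))) := fun hm => h ⟨x, hm, hx⟩
      have hcd : ∃ c d : ℝ, c < x ∧ x < d ∧ ACStar a b (fun y => p.1 (projIcc a b hab.le y))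
          (Icc c d ∩ Subtype.val '' (p.2 : Set (Icc a b))) := by
        by_cases hxK : (x : ℝ) ∈ Subtype.val '' (p.2 : Set (Icc a b))
        · by_contra hcon
          push Not at hcon
          exact hx' ⟨hxK, hcon⟩
        · have hcl : IsClosed (Subtype.val '' (p.2 : Set (Icc a b))) :=
            (p.2.2.isCompact.image continuous_subtype_val).isClosed
          obtain ⟨r, hr, hball⟩ := Metric.isOpen_iff.1 hcl.isOpen_compl x hxK
          refine ⟨x - r / 2, x + r / 2, by linarith, by linarith, ?_⟩
          refine acstar_mono (L := ∅) ?_ (acstar_empty _)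
          rintro y ⟨⟨h1, h2⟩, hy⟩
          refine hball ?_ hy
          rw [Metric.mem_ball, Real.dist_eq, abs_lt]
          constructor <;> linarith
      obtain ⟨c, d, hc, hd, hA⟩ := hcd
      obtain ⟨c', hc1, hc2⟩ := exists_rat_btwn hc
      obtain ⟨d', hd1, hd2⟩ := exists_rat_btwn hd
      exact ⟨(c', d'), ⟨hc2, hd1⟩,
        acstar_mono (inter_subset_inter_left _ (Icc_subset_Icc hc1.le hd2.le)) hA⟩
    choose! s hs1 hs2 using hloc
    obtain ⟨T, hTC, hT⟩ := hC.elim_nhds_subcover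
      (fun x => {y : Icc a b | ((s x).1 : ℝ) < y ∧ (y : ℝ) < (s x).2}) (fun x hx => by
        refine IsOpen.mem_nhds ?_ (hs1 x hx)
        exact (isOpen_lt continuous_const continuous_subtype_val).inter
          (isOpen_lt continuous_subtype_val continuous_const))
    refine ⟨T.image s, ?_, ?_⟩
    · rwa [Finset.set_biUnion_finset_image]
    · intro q hq
      obtain ⟨x, hx, rfl⟩ := Finset.mem_image.1 hq
      exact hs2 x (hTC x hx)
  · rintro ⟨S, hS, hA⟩ ⟨x, hx, hxC⟩
    obtain ⟨s, hs, h1, h2⟩ := mem_iUnion₂.1 (hS hxC)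
    exact hx.2 _ _ h1 h2 (hA s hs)

end DFProof

theorem DFMap_measurable (a b : ℝ) (hab : a < b) :
    @Measurable (C(Icc a b, ℝ) × KSpace a b) (KSpace a b) (borel _) (borel _)
      (DFMap a b hab) := by
  let _ : MeasurableSpace (C(Icc a b, ℝ) × KSpace a b) := borel _
  have : BorelSpace (C(Icc a b, ℝ) × KSpace a b) := ⟨rfl⟩
  have hAC : ∀ c d : ℝ, MeasurableSet {p : C(Icc a b, ℝ) × KSpace a b |
      ACStar a b (fun y => p.1 (projIcc a b hab.le y))
        (Icc c d ∩ Subtype.val '' (p.2 : Set (Icc a b)))} := by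
    intro c d
    simp only [DFProof.acstar_iff hab, ofPred_forall, ofPred_exists]
    refine MeasurableSet.iInter fun k => MeasurableSet.iUnion fun m =>
      MeasurableSet.iInter fun n => ?_
    have := (DFProof.isClosed_projBad (a := a) (b := b) n
      (1 / ((k : ℝ) + 1)) (1 / ((m : ℝ) + 1)) c d).measurableSet.compl
    exact this
  have hcomp : ∀ C : Set (Icc a b), IsCompact C →
      MeasurableSet {p | (((DFMap a b hab p : KSpace a b) : Set (Icc a b)) ∩ C).Nonempty} := by
    intro C hC
    refine MeasurableSet.of_compl ?_
    have : {p | (((DFMap a b hab p : KSpace a b) : Set (Icc a b)) ∩ C).Nonempty}ᶜ =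
        ⋃ S : Finset (ℚ × ℚ),
          ⋃ _ : C ⊆ ⋃ s ∈ S, {x : Icc a b | (s.1 : ℝ) < x ∧ (x : ℝ) < s.2},
          ⋂ s ∈ S, {p : C(Icc a b, ℝ) × KSpace a b |
            ACStar a b (fun y => p.1 (projIcc a b hab.le y))
            (Icc (s.1 : ℝ) (s.2 : ℝ) ∩ Subtype.val '' (p.2 : Set (Icc a b)))} := by
      ext p
      simp only [mem_iUnion, mem_iInter, exists_prop]
      exact DFProof.miss_iff hab p hC
    rw [this]
    exact MeasurableSet.iUnion fun S => MeasurableSet.iUnion fun _ =>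
      Finset.measurableSet_biInter S fun s _ => hAC _ _
  refine DFProof.measurable_of_hit _ fun U hU => ?_
  obtain ⟨C, hCc, -, hCU, -⟩ := hU.exists_iUnion_isClosed
  have : {p | (((DFMap a b hab p : KSpace a b) : Set (Icc a b)) ∩ U).Nonempty} =
      ⋃ n, {p | (((DFMap a b hab p : KSpace a b) : Set (Icc a b)) ∩ C n).Nonempty} := by
    ext p
    simp only [← hCU, inter_iUnion, nonempty_iUnion, mem_iUnion, mem_ofPred_eq]
  rw [this]
  exact MeasurableSet.iUnion fun n => hcomp _ (hCc n).isCompact
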